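/- Let I be a ROS-UET instance on a network G=(V,E,c,v*) with g vertices, let (T,A,D) be a pre-schedule for I, let (R^q)_{q=1}^m be routes complying with (T,A,D) such that each route R^q stays in each vertex v ∈ V for at least n_v time in total, and let S' be a critical schedule compatible with (R^q)_{q=1}^m. Then S' can be extended to a feasible schedule S compatible with (R^q)_{q=1}^m, i.e., there is a feasible schedule S compatible with (R^q)_{q=1}^m such that S(J_i,M_q) = S'(J_i,M_q) for every job J_i located in a critical vertex and every machine M_q. -/

import Mathlib

/-- A network: a connected simple graph with positive integer travel times
and a distinguished depot vertex. -/
structure Network (V : Type*) where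
  G : SimpleGraph V
  conn : G.Connected
  c : V → V → ℕ
  csymm : ∀ u v : V, c u v = c v u
  cpos : ∀ u v : V, G.Adj u v → 0 < c u v
  depot : V

/-- A route with `s` stays; stay `k` (for `k < s`) is `(a k, v k, b k)`. -/
structure Route (V : Type*) where
  s : ℕ
  a : ℕ → ℕ
  v : ℕ → V
  b : ℕ → ℕ

/-- The length of a route: the end of its last stay. -/
def Route.length {V : Type*} (R : Route V) : ℕ := R.b (R.s - 1)

/-- `R` is a valid route in the network `N`. -/
def IsRoute {V : Type*} (N : Network V) (R : Route V) : Prop :=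
  0 < R.s ∧ R.v 0 = N.depot ∧ R.v (R.s - 1) = N.depot ∧ R.a 0 = 0 ∧
    (∀ k < R.s, R.a k ≤ R.b k) ∧
    ∀ k, k + 1 < R.s →
      N.G.Adj (R.v k) (R.v (k + 1)) ∧
      R.a (k + 1) = R.b k + N.c (R.v k) (R.v (k + 1))

/-- Routes `R` (one per machine) are compatible with the (unit execution time)
schedule `S`: each machine stays at the location of each job while processing it. -/
def Compatible {V : Type*} {n m : ℕ} (loc : Fin n → V)
    (S : Fin n → Fin m → ℕ) (R : Fin m → Route V) : Prop :=
  ∀ (i : Fin n) (q : Fin m), ∃ k < (R q).s,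
    (R q).v k = loc i ∧ (R q).a k ≤ S i q ∧ S i q + 1 ≤ (R q).b k

/-- A schedule for a ROS-UET instance is feasible. -/
def Feasible {V : Type*} {n m : ℕ} (N : Network V) (loc : Fin n → V)
    (S : Fin n → Fin m → ℕ) : Prop :=
  (∀ (i j : Fin n) (q : Fin m), i ≠ j → S i q ≠ S j q) ∧
  (∀ (i : Fin n) (q r : Fin m), q ≠ r → S i q ≠ S i r) ∧
  ∃ R : Fin m → Route V, (∀ q, IsRoute N (R q)) ∧ Compatible loc S R

/-- The makespan of a schedule: the least `L` such that there are compatible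
routes, each of length at most `L`. -/
noncomputable def makespan {V : Type*} {n m : ℕ} (N : Network V) (loc : Fin n → V)
    (S : Fin n → Fin m → ℕ) : ℕ :=
  sInf {L | ∃ R : Fin m → Route V, (∀ q, IsRoute N (R q)) ∧
    Compatible loc S R ∧ ∀ q, Route.length (R q) ≤ L}

/-- The total travel time of a walk in a graph with travel times `c`. -/
def walkWeight {V : Type*} {G : SimpleGraph V} (c : V → V → ℕ) {u w : V}
    (p : G.Walk u w) : ℕ :=
  (p.darts.map fun d => c d.toProd.1 d.toProd.2).sum

/-- A vertex is critical if it contains fewer than `m` jobs. -/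
def Critical {V : Type*} [DecidableEq V] {n : ℕ} (m : ℕ) (loc : Fin n → V)
    (v : V) : Prop :=
  (Finset.univ.filter (fun i : Fin n => loc i = v)).card < m

/-- A pre-schedule `(T, A, D)`: a sequence of `s` pre-stays, the `k`-th
(for `k < s`) being `(q k, w k)`, together with a length assignment `A`
and a displacement `D`. -/
structure PreSchedule (V : Type*) (m : ℕ) where
  s : ℕ
  q : ℕ → Fin m
  w : ℕ → V
  A : ℕ → ℕ
  D : ℕ → ℕ

/-- Well-formedness of a pre-schedule: at most `m² + (2g-3)·m` pre-stays,
`A` takes values in `{0,…,2m-1}` and `D` in `{0,…,2m}` on pre-stays in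
critical vertices. -/
def IsPreSchedule {V : Type*} [Fintype V] [DecidableEq V] {n : ℕ} (m : ℕ)
    (loc : Fin n → V) (P : PreSchedule V m) : Prop :=
  P.s ≤ m ^ 2 + (2 * Fintype.card V - 3) * m ∧
  ∀ k < P.s, Critical m loc (P.w k) → P.A k < 2 * m ∧ P.D k ≤ 2 * m

/-- `sigma P k` is the (0-based) position of the `k`-th pre-stay among the
pre-stays of machine `q k` in the pre-stay sequence. -/
def sigma {V : Type*} {m : ℕ} (P : PreSchedule V m) (k : ℕ) : ℕ :=
  ((Finset.range k).filter (fun j => P.q j = P.q k)).card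

/-- Routes `(R q)` comply with the pre-schedule `P = (T, A, D)`. -/
def Comply {V : Type*} [DecidableEq V] {n : ℕ} (m : ℕ) (loc : Fin n → V)
    (P : PreSchedule V m) (R : Fin m → Route V) : Prop :=
  (∀ mq : Fin m, (R mq).s = ((Finset.range P.s).filter (fun j => P.q j = mq)).card) ∧
  (∀ k < P.s, (R (P.q k)).v (sigma P k) = P.w k) ∧
  (∀ k ℓ, k < ℓ → ℓ < P.s →
    (R (P.q k)).a (sigma P k) ≤ (R (P.q ℓ)).a (sigma P ℓ)) ∧
  (∀ k < P.s, Critical m loc (P.w k) →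
    (R (P.q k)).b (sigma P k) - (R (P.q k)).a (sigma P k) = P.A k) ∧
  (∀ k ℓ, k < ℓ → ℓ < P.s → Critical m loc (P.w k) → Critical m loc (P.w ℓ) →
    (∀ i, k < i → i < ℓ → ¬ Critical m loc (P.w i)) →
    (P.D ℓ = 2 * m →
      (R (P.q k)).a (sigma P k) + 2 * m ≤ (R (P.q ℓ)).a (sigma P ℓ)) ∧
    (P.D ℓ < 2 * m →
      (R (P.q ℓ)).a (sigma P ℓ) = (R (P.q k)).a (sigma P k) + P.D ℓ))

/-- A critical schedule: start times for jobs in critical vertices such that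
no machine processes two such jobs at once and no such job is processed by two
machines at once (values on jobs in non-critical vertices are irrelevant). -/
def IsCriticalSchedule {V : Type*} [DecidableEq V] {n m : ℕ} (loc : Fin n → V)
    (S' : Fin n → Fin m → ℕ) : Prop :=
  (∀ (i j : Fin n) (q : Fin m), i ≠ j →
    Critical m loc (loc i) → Critical m loc (loc j) → S' i q ≠ S' j q) ∧
  (∀ (i : Fin n) (q r : Fin m), q ≠ r →
    Critical m loc (loc i) → S' i q ≠ S' i r)

/-- A critical schedule is compatible with routes `(R q)`: each machine stays
at the location of each job in a critical vertex while processing it. -/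
def CriticalCompatible {V : Type*} [DecidableEq V] {n m : ℕ} (loc : Fin n → V)
    (S' : Fin n → Fin m → ℕ) (R : Fin m → Route V) : Prop :=
  ∀ (i : Fin n) (q : Fin m), Critical m loc (loc i) → ∃ k < (R q).s,
    (R q).v k = loc i ∧ (R q).a k ≤ S' i q ∧ S' i q + 1 ≤ (R q).b k

/-! In a vertex `v` with `n_v ≥ m` jobs, give each machine a set of `n_v` unit time slots during
which it stays in `v`. This is a bipartite graph between machines and time slots in which machines
have degree `n_v` and time slots have degree at most `m ≤ n_v`, so by Kőnig's edge colouring theorem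
its edges can be properly coloured with the `n_v` jobs in `v`: the job colouring the edge `(q, t)`
is processed by machine `q` at time `t`. The schedules of distinct vertices never conflict, because
a machine is in one place at a time and a job has only one location. -/

open Finset Function Matrix

section Matrix

variable {ι : Type*} [Fintype ι]

theorem exists_perm_forall_ne_zero_of_mem_doublyStochastic [DecidableEq ι] {𝕜 : Type*} [Field 𝕜]
    [LinearOrder 𝕜] [IsStrictOrderedRing 𝕜] {M : Matrix ι ι 𝕜} (hM : M ∈ doublyStochastic 𝕜 ι) :
    ∃ σ : Equiv.Perm ι, ∀ i, M i (σ i) ≠ 0 := by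
  obtain ⟨w, hw_nonneg, hw_sum, rfl⟩ := exists_eq_sum_perm_of_mem_doublyStochastic hM
  obtain ⟨σ, -, hσ⟩ := exists_ne_zero_of_sum_ne_zero (hw_sum.trans_ne one_ne_zero)
  refine ⟨σ, fun i hzero => hσ ?_⟩
  have hterm_nonneg (τ : Equiv.Perm ι) : 0 ≤ (w τ • τ.permMatrix 𝕜) i (σ i) :=
    mul_nonneg (hw_nonneg τ) (nonneg_of_mem_doublyStochastic permMatrix_mem_doublyStochastic)
  rw [Matrix.sum_apply, sum_eq_zero_iff_of_nonneg fun τ _ => hterm_nonneg τ] at hzero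
  simpa [PEquiv.toMatrix_apply] using hzero σ (mem_univ σ)

theorem exists_perm_forall_ne_zero_of_sum_eq {A : Matrix ι ι ℕ} {d : ℕ} (hd : d ≠ 0)
    (hrow : ∀ i, ∑ j, A i j = d) (hcol : ∀ j, ∑ i, A i j = d) :
    ∃ σ : Equiv.Perm ι, ∀ i, A i (σ i) ≠ 0 := by
  classical
  obtain ⟨M, hM, hAM⟩ : ∃ M ∈ doublyStochastic ℚ ι, A.map (↑) = (d : ℚ) • M := by
    rw [exists_mem_doublyStochastic_eq_smul_iff d.cast_nonneg]
    simp only [Matrix.map_apply, ← Nat.cast_sum, hrow, hcol, Nat.cast_nonneg, implies_true,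
      and_self]
  obtain ⟨σ, hσ⟩ := exists_perm_forall_ne_zero_of_mem_doublyStochastic hM
  refine ⟨σ, fun i hzero => hσ i ?_⟩
  have hentry := congrFun (congrFun hAM i) (σ i)
  simpa [hzero, hd] using hentry

theorem exists_eq_sum_permMatrix [DecidableEq ι] {d : ℕ} {A : Matrix ι ι ℕ}
    (hrow : ∀ i, ∑ j, A i j = d) (hcol : ∀ j, ∑ i, A i j = d) :
    ∃ σ : Fin d → Equiv.Perm ι, A = ∑ k, (σ k).permMatrix ℕ := by
  induction d generalizing A with
  | zero =>
    refine ⟨Fin.elim0, ?_⟩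
    ext i j
    simpa using (sum_eq_zero_iff.mp (hrow i)) j (mem_univ j)
  | succ d ih =>
    obtain ⟨τ, hτ⟩ := exists_perm_forall_ne_zero_of_sum_eq d.succ_ne_zero hrow hcol
    obtain ⟨B, rfl⟩ : ∃ B, A = τ.permMatrix ℕ + B := by
      refine ⟨A - τ.permMatrix ℕ, ?_⟩
      ext i j
      have hle : τ.permMatrix ℕ i j ≤ A i j := by
        rcases eq_or_ne (τ i) j with rfl | hij
        · simpa [PEquiv.toMatrix_apply, Nat.one_le_iff_ne_zero] using hτ i
        · simp [PEquiv.toMatrix_apply, hij]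
      exact (Nat.add_sub_of_le hle).symm
    simp only [Matrix.add_apply, sum_add_distrib,
      sum_row_of_mem_doublyStochastic permMatrix_mem_doublyStochastic,
      sum_col_of_mem_doublyStochastic permMatrix_mem_doublyStochastic,
      Nat.add_comm 1, Nat.add_right_cancel_iff] at hrow hcol
    obtain ⟨σ, rfl⟩ := ih hrow hcol
    exact ⟨Fin.cons τ σ, by simp [Fin.sum_univ_succ]⟩

end Matrix

section Transversals

variable {α β : Type*} [Fintype α] [DecidableEq β]

/-- The bipartite graph joining each `a : α` to the elements of `T a`, as a matrix indexed by
`α ⊕ β`, with loops at the vertices `b : β` that raise their degree to `d`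
(the truncated subtraction presupposes that no such degree exceeds `d`). -/
def paddedAdjMatrix (T : α → Finset β) (d : ℕ) : Matrix (α ⊕ β) (α ⊕ β) ℕ :=
  let E : Matrix α β ℕ := of fun a b => if b ∈ T a then 1 else 0
  fromBlocks 0 E Eᵀ (diagonal fun b => d - #{a | b ∈ T a})

theorem isSymm_paddedAdjMatrix (T : α → Finset β) (d : ℕ) : (paddedAdjMatrix T d).IsSymm :=
  IsSymm.fromBlocks isSymm_zero rfl (isSymm_diagonal _)

theorem sum_paddedAdjMatrix [Fintype β] {T : α → Finset β} {d : ℕ} (hT : ∀ a, #(T a) = d)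
    (hdeg : ∀ b, #{a | b ∈ T a} ≤ d) (x : α ⊕ β) : ∑ y, paddedAdjMatrix T d x y = d := by
  rcases x with a | b
  · simp [paddedAdjMatrix, hT]
  · simp [paddedAdjMatrix, diagonal_apply, hdeg]

theorem exists_injective_transversals_fin [Finite β] {T : α → Finset β} {d : ℕ}
    (hT : ∀ a, #(T a) = d) (hdeg : ∀ b, #{a | b ∈ T a} ≤ d) :
    ∃ f : Fin d → α → β, (∀ k a, f k a ∈ T a) ∧ (∀ k, Injective (f k)) ∧
      ∀ a, Injective fun k => f k a := by
  classical
  have := Fintype.ofFinite β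
  have hrow := sum_paddedAdjMatrix hT hdeg
  have hcol (y) : ∑ x, paddedAdjMatrix T d x y = d := by
    simpa only [(isSymm_paddedAdjMatrix T d).apply] using hrow y
  obtain ⟨σ, hσ⟩ := exists_eq_sum_permMatrix hrow hcol
  have hcount (x y) : paddedAdjMatrix T d x y = #{k | σ k x = y} := by
    simp [hσ, Matrix.sum_apply, PEquiv.toMatrix_apply]
  have hpos (k x) : paddedAdjMatrix T d x (σ k x) ≠ 0 := by
    rw [hcount]
    exact (card_pos.mpr ⟨k, by simp⟩).ne'
  have hedge (k a) : ∃ b ∈ T a, σ k (.inl a) = .inr b := by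
    have hka := hpos k (.inl a)
    rcases h : σ k (.inl a) with a' | b
    · simp [h, paddedAdjMatrix] at hka
    · exact ⟨b, by simpa [h, paddedAdjMatrix] using hka, rfl⟩
  choose f hfT hf using hedge
  refine ⟨f, hfT, fun k a a' h => ?_, fun a k k' h => ?_⟩
  · exact Sum.inl_injective ((σ k).injective (by rw [hf, hf, h]))
  · have hle : #{l | σ l (.inl a) = .inr (f k a)} ≤ 1 := by
      simp [← hcount, paddedAdjMatrix, hfT]
    exact card_le_one.mp hle k (by simp [hf]) k' (by simp [hf, h])

/-- **Kőnig's edge colouring theorem**, for bipartite graphs that are regular on the side `α`; the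
edges of colour `k` form the matching `f k`. -/
theorem exists_injective_transversals {κ : Type*} [Fintype κ] {T : α → Finset β}
    (hT : ∀ a, #(T a) = Fintype.card κ) (hdeg : ∀ b, #{a | b ∈ T a} ≤ Fintype.card κ) :
    ∃ f : κ → α → β, (∀ k a, f k a ∈ T a) ∧ (∀ k, Injective (f k)) ∧
      ∀ a, Injective fun k => f k a := by
  let U := univ.biUnion T
  have hTU (a) : ∀ b ∈ T a, b ∈ U := subset_biUnion_of_mem T (mem_univ a)
  obtain ⟨f, hfT, hf, hf'⟩ := exists_injective_transversals_fin
    (T := fun a => (T a).subtype (· ∈ U)) (d := Fintype.card κ)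
    (fun a => by rw [card_subtype, filter_true_of_mem (hTU a), hT])
    (fun b => by simpa only [mem_subtype] using hdeg b)
  exact ⟨fun k a => f (Fintype.equivFin κ k) a, fun k a => mem_subtype.mp (hfT _ a),
    fun k => Subtype.val_injective.comp (hf _),
    fun a => Subtype.val_injective.comp ((hf' a).comp (Fintype.equivFin κ).injective)⟩

end Transversals

section Slots

variable {V : Type*} [DecidableEq V]

/-- The start times of the unit time slots that `R` spends in the vertex `v`. -/
def Route.slots (R : Route V) (v : V) : Finset ℕ :=
  {k ∈ range R.s | R.v k = v}.biUnion fun k => Ico (R.a k) (R.b k)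

theorem Route.mem_slots {R : Route V} {v : V} {t : ℕ} :
    t ∈ R.slots v ↔ ∃ k < R.s, R.v k = v ∧ R.a k ≤ t ∧ t + 1 ≤ R.b k := by
  simp only [slots, mem_biUnion, mem_filter, mem_range, mem_Ico, and_assoc, Nat.succ_le_iff]

theorem compatible_iff_forall_mem_slots {n m : ℕ} {loc : Fin n → V} {S : Fin n → Fin m → ℕ}
    {R : Fin m → Route V} : Compatible loc S R ↔ ∀ i q, S i q ∈ (R q).slots (loc i) := by
  simp only [Compatible, Route.mem_slots]

end Slots

namespace IsRoute

variable {V : Type*} {N : Network V} {R : Route V}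

theorem b_le_a (hR : IsRoute N R) {k l : ℕ} (hkl : k < l) (hl : l < R.s) : R.b k ≤ R.a l := by
  obtain ⟨-, -, -, -, hab, hnext⟩ := hR
  induction l, hkl using Nat.le_induction with
  | base => exact (hnext k hl).2 ▸ Nat.le_add_right _ _
  | succ l _ ih =>
    calc R.b k ≤ R.a l := ih (by omega)
      _ ≤ R.b l := hab l (by omega)
      _ ≤ R.a (l + 1) := (hnext l hl).2 ▸ Nat.le_add_right _ _

theorem pairwiseDisjoint_Ico (hR : IsRoute N R) :
    (Set.Iio R.s).PairwiseDisjoint fun k => Ico (R.a k) (R.b k) := by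
  have hlt {k l : ℕ} (hkl : k < l) (hl : l < R.s) :
      Disjoint (Ico (R.a k) (R.b k)) (Ico (R.a l) (R.b l)) := by
    rw [disjoint_left]
    intro t htk htl
    exact ((mem_Ico.mp htk).2.trans_le (hR.b_le_a hkl hl)).not_ge (mem_Ico.mp htl).1
  intro k hk l hl hne
  rcases hne.lt_or_gt with hkl | hlk
  · exact hlt hkl hl
  · exact (hlt hlk hk).symm

variable [DecidableEq V]

theorem card_slots (hR : IsRoute N R) (v : V) :
    #(R.slots v) = ∑ k ∈ range R.s with R.v k = v, (R.b k - R.a k) := by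
  rw [Route.slots, card_biUnion]
  · simp only [Nat.card_Ico]
  · intro k hk l hl hne
    exact hR.pairwiseDisjoint_Ico (mem_range.mp (mem_filter.mp hk).1)
      (mem_range.mp (mem_filter.mp hl).1) hne

theorem eq_of_mem_slots (hR : IsRoute N R) {v w : V} {t : ℕ} (hv : t ∈ R.slots v)
    (hw : t ∈ R.slots w) : v = w := by
  obtain ⟨k, hk, rfl, hkt⟩ := Route.mem_slots.mp hv
  obtain ⟨l, hl, rfl, hlt⟩ := Route.mem_slots.mp hw
  rw [hR.pairwiseDisjoint_Ico.elim_finset hk hl t (mem_Ico.mpr hkt) (mem_Ico.mpr hlt)]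

end IsRoute

section LocalSchedule

variable {V : Type*} [DecidableEq V]

/-- A conflict-free schedule, compatible with the routes `R`, of the jobs located in the single
vertex `v`. -/
structure IsLocalSchedule {ι μ : Type*} (loc : ι → V) (R : μ → Route V) (v : V)
    (F : {i // loc i = v} → μ → ℕ) : Prop where
  mem_slots : ∀ i q, F i q ∈ (R q).slots v
  injective_machine : ∀ i, Injective (F i)
  injective_job : ∀ q, Injective fun i => F i q

theorem exists_isLocalSchedule {ι μ : Type*} [Fintype ι] [Fintype μ] {loc : ι → V}
    {R : μ → Route V} {v : V} (hmachines : Fintype.card μ ≤ #{i | loc i = v})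
    (hslots : ∀ q, #{i | loc i = v} ≤ #((R q).slots v)) :
    ∃ F, IsLocalSchedule loc R v F := by
  simp only [← Fintype.card_subtype] at hmachines hslots
  choose T hTR hT using fun q => exists_subset_card_eq (hslots q)
  obtain ⟨F, hFT, hmachine, hjob⟩ := exists_injective_transversals hT
    fun _ => (card_le_univ _).trans hmachines
  exact ⟨F, fun i q => hTR q (hFT i q), hmachine, hjob⟩

variable {n m : ℕ} {loc : Fin n → V} {R : Fin m → Route V}

theorem IsCriticalSchedule.isLocalSchedule {S' : Fin n → Fin m → ℕ}
    (hS' : IsCriticalSchedule loc S') (hcompat : CriticalCompatible loc S' R) {v : V}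
    (hv : Critical m loc v) : IsLocalSchedule loc R v fun i => S' i where
  mem_slots := by
    rintro ⟨i, rfl⟩ q
    exact Route.mem_slots.mpr (hcompat i q hv)
  injective_machine := by
    rintro ⟨i, rfl⟩ q r heq
    by_contra hqr
    exact hS'.2 i q r hqr hv heq
  injective_job := by
    rintro q ⟨i, rfl⟩ ⟨j, hj⟩ heq
    by_contra hij
    exact hS'.1 i j q (fun h => hij (Subtype.ext h)) hv (hj ▸ hv) heq

theorem feasible_and_compatible_of_isLocalSchedule {N : Network V} (hR : ∀ q, IsRoute N (R q))
    {F : ∀ v, {i // loc i = v} → Fin m → ℕ} (hF : ∀ v, IsLocalSchedule loc R v (F v)) :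
    Feasible N loc (fun i => F (loc i) ⟨i, rfl⟩) ∧
      Compatible loc (fun i => F (loc i) ⟨i, rfl⟩) R := by
  have hcompat : Compatible loc (fun i => F (loc i) ⟨i, rfl⟩) R :=
    compatible_iff_forall_mem_slots.mpr fun i => (hF (loc i)).mem_slots ⟨i, rfl⟩
  have eq_of_same_vertex {i j : Fin n} {q : Fin m} {v w : V} (hi : loc i = v) (hj : loc j = w)
      (hvw : v = w) (heq : F v ⟨i, hi⟩ q = F w ⟨j, hj⟩ q) : i = j := by
    subst hvw
    exact congrArg Subtype.val ((hF v).injective_job q heq)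
  refine ⟨⟨fun i j q hij heq => hij ?_, fun i q r hqr heq => hqr ?_, R, hR, hcompat⟩, hcompat⟩
  · change F (loc i) ⟨i, rfl⟩ q = F (loc j) ⟨j, rfl⟩ q at heq
    have hi := (hF (loc i)).mem_slots ⟨i, rfl⟩ q
    have hj := (hF (loc j)).mem_slots ⟨j, rfl⟩ q
    rw [← heq] at hj
    exact eq_of_same_vertex rfl rfl ((hR q).eq_of_mem_slots hi hj) heq
  · exact (hF (loc i)).injective_machine ⟨i, rfl⟩ heq

end LocalSchedule

theorem statement8_general {V : Type*} [DecidableEq V] {n m : ℕ} {N : Network V}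
    {loc : Fin n → V} {R : Fin m → Route V} (hR : ∀ q, IsRoute N (R q))
    (hstay : ∀ (q : Fin m) (v : V), ¬ Critical m loc v →
      #{i | loc i = v} ≤ ∑ k ∈ range (R q).s with (R q).v k = v, ((R q).b k - (R q).a k))
    {S' : Fin n → Fin m → ℕ} (hS' : IsCriticalSchedule loc S')
    (hS'compat : CriticalCompatible loc S' R) :
    ∃ S : Fin n → Fin m → ℕ, Feasible N loc S ∧ Compatible loc S R ∧
      ∀ (i : Fin n) (q : Fin m), Critical m loc (loc i) → S i q = S' i q := by
  have hlocal (v : V) : ∃ F, IsLocalSchedule loc R v F ∧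
      (Critical m loc v → ∀ i q, F i q = S' i q) := by
    by_cases hv : Critical m loc v
    · exact ⟨_, hS'.isLocalSchedule hS'compat hv, fun _ _ _ => rfl⟩
    · have hmachines : Fintype.card (Fin m) ≤ #{i | loc i = v} := by
        simpa only [Fintype.card_fin] using not_lt.mp hv
      obtain ⟨F, hF⟩ := exists_isLocalSchedule hmachines
        fun q => (hstay q v hv).trans_eq ((hR q).card_slots v).symm
      exact ⟨F, hF, fun h => absurd h hv⟩
  choose F hF hFS' using hlocal
  obtain ⟨hfeasible, hcompat⟩ := feasible_and_compatible_of_isLocalSchedule hR hF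
  exact ⟨_, hfeasible, hcompat, fun i q hi => hFS' _ hi ⟨i, rfl⟩ q⟩

/-- If routes `(R q)` comply with a pre-schedule `(T, A, D)`
and each route stays in each vertex `v` for at least `n_v` time in total, then
any critical schedule `S'` compatible with `(R q)` can be extended to a
feasible schedule `S` compatible with `(R q)` that agrees with `S'` on all
jobs located in critical vertices. -/
theorem statement8 {V : Type*} [Fintype V] [DecidableEq V] {n m : ℕ}
    (N : Network V) (loc : Fin n → V)
    (P : PreSchedule V m) (hP : IsPreSchedule m loc P)
    (R : Fin m → Route V)
    (hR : ∀ q, IsRoute N (R q))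
    (hcomply : Comply m loc P R)
    (hstay : ∀ (q : Fin m) (v : V),
      (Finset.univ.filter (fun i : Fin n => loc i = v)).card ≤
        ∑ k ∈ (Finset.range (R q).s).filter (fun k => (R q).v k = v),
          ((R q).b k - (R q).a k))
    (S' : Fin n → Fin m → ℕ)
    (hS' : IsCriticalSchedule loc S')
    (hS'compat : CriticalCompatible loc S' R) :
    ∃ S : Fin n → Fin m → ℕ, Feasible N loc S ∧ Compatible loc S R ∧
      ∀ (i : Fin n) (q : Fin m), Critical m loc (loc i) → S i q = S' i q :=
  statement8_general hR (fun q v _ => hstay q v) hS' hS'compat
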